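/- Let ξ, μ, ν ∈ 𝓜 with ξ(A) ≤ μ(A) for all Borel A ⊆ ℝ and μ ≤_pcd ν, and let S_μ be a shadow of μ in ν. Then: (i) ξ ≤_pcd ν; (ii) ξ ≤_pcd S_μ; (iii) if S' is a shadow of ξ in S_μ and S'' is a shadow of ξ in ν, then S' = S''; and (iv) every shadow S'' of ξ in ν satisfies S''(A) ≤ S_μ(A) for all Borel A. -/

import Mathlib

open MeasureTheory Set Filter

noncomputable section

/-- `η ∈ 𝓜`: a finite Borel measure on ℝ with finite first moment. -/
def MemM (η : MeasureTheory.Measure ℝ) : Prop :=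
  MeasureTheory.IsFiniteMeasure η ∧ MeasureTheory.Integrable (fun x : ℝ => x) η

/-- Convex-decreasing order `≤_cd`. -/
def LeCD (η χ : MeasureTheory.Measure ℝ) : Prop :=
  ∀ f : ℝ → ℝ, ConvexOn ℝ Set.univ f → Antitone f →
    MeasureTheory.Integrable f η → MeasureTheory.Integrable f χ →
    ∫ x, f x ∂η ≤ ∫ x, f x ∂χ

/-- Positive convex-decreasing order `≤_pcd`. -/
def LePCD (η χ : MeasureTheory.Measure ℝ) : Prop :=
  ∀ f : ℝ → ℝ, (∀ x, 0 ≤ f x) → ConvexOn ℝ Set.univ f → Antitone f →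
    MeasureTheory.Integrable f η → MeasureTheory.Integrable f χ →
    ∫ x, f x ∂η ≤ ∫ x, f x ∂χ

/-- Positive convex order `≤_pc`. -/
def LePC (η χ : MeasureTheory.Measure ℝ) : Prop :=
  ∀ f : ℝ → ℝ, (∀ x, 0 ≤ f x) → ConvexOn ℝ Set.univ f →
    MeasureTheory.Integrable f η → MeasureTheory.Integrable f χ →
    ∫ x, f x ∂η ≤ ∫ x, f x ∂χ

/-- A supermartingale coupling of `η` and `χ`. -/
def IsSupermartingaleCoupling (η χ : MeasureTheory.Measure ℝ)
    (π : MeasureTheory.Measure (ℝ × ℝ)) : Prop :=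
  MeasureTheory.IsProbabilityMeasure π ∧
  π.map Prod.fst = η ∧ π.map Prod.snd = χ ∧
  MeasureTheory.Integrable (fun p : ℝ × ℝ => p.2) π ∧
  ∀ B : Set ℝ, MeasurableSet B →
    ∫ p in B ×ˢ (Set.univ : Set ℝ), (p : ℝ × ℝ).2 ∂π ≤ ∫ x in B, x ∂η

/-- The potential function `P_η(k) = ∫ (k-x)⁺ η(dx)`. -/
def Ppot (η : MeasureTheory.Measure ℝ) (k : ℝ) : ℝ := ∫ x, max (k - x) 0 ∂η

/-- The potential function `C_η(k) = ∫ (x-k)⁺ η(dx)`. -/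
def Cpot (η : MeasureTheory.Measure ℝ) (k : ℝ) : ℝ := ∫ x, max (x - k) 0 ∂η

/-- The left-continuous quantile function `G_η(u) = sup {k | η((-∞,k]) < u}`. -/
def quantile (η : MeasureTheory.Measure ℝ) (u : ℝ) : ℝ :=
  sSup {k : ℝ | (η (Set.Iic k)).toReal < u}

/-- The lift `μ_u = μ|_{(-∞,G(u))} + (u - μ((-∞,G(u)))) δ_{G(u)}`, with `μ_0 = 0`, `μ_1 = μ`. -/
def muU (μ : MeasureTheory.Measure ℝ) (u : ℝ) : MeasureTheory.Measure ℝ :=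
  if u ≤ 0 then 0
  else if 1 ≤ u then μ
  else μ.restrict (Set.Iio (quantile μ u)) +
    (ENNReal.ofReal (u - (μ (Set.Iio (quantile μ u))).toReal)) •
      MeasureTheory.Measure.dirac (quantile μ u)

/-- `S` is a shadow of `μ` in `ν`. -/
def IsShadow (μ ν S : MeasureTheory.Measure ℝ) : Prop :=
  MemM S ∧ LeCD μ S ∧ (∀ A : Set ℝ, MeasurableSet A → S A ≤ ν A) ∧
  ∀ η : MeasureTheory.Measure ℝ, MemM η → LeCD μ η →
    (∀ A : Set ℝ, MeasurableSet A → η A ≤ ν A) → LeCD S η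

/-- `h` is the convex hull of `f`. -/
def IsConvexHullFn (f h : ℝ → ℝ) : Prop :=
  ConvexOn ℝ Set.univ h ∧ (∀ x, h x ≤ f x) ∧
  ∀ g : ℝ → ℝ, ConvexOn ℝ Set.univ g → (∀ x, g x ≤ f x) → ∀ x, g x ≤ h x

/-- The class `𝒟(a,b)`. -/
def MemD (a b : ℝ) (f : ℝ → ℝ) : Prop :=
  (∀ x, 0 ≤ f x) ∧ Monotone f ∧ ConvexOn ℝ Set.univ f ∧
  Filter.Tendsto f Filter.atBot (nhds 0) ∧
  Filter.Tendsto (fun z => f z - (a * z - b)) Filter.atTop (nhds 0)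

/-- The topological support of a measure. -/
def msupport (η : MeasureTheory.Measure ℝ) : Set ℝ :=
  {x : ℝ | ∀ U ∈ nhds x, η U ≠ 0}

open scoped ENNReal Topology

lemma lintegral_put_eq (τ : Measure ℝ) [SFinite τ] (k : ℝ) :
    ∫⁻ x, ENNReal.ofReal (k - x) ∂τ = ∫⁻ t in Iic k, τ (Iic t) := by
  have hmeas : MeasurableSet {p : ℝ × ℝ | p.1 ≤ p.2} := measurableSet_le measurable_fst measurable_snd
  have h1 : ∀ x : ℝ, ENNReal.ofReal (k - x) =
      ∫⁻ t in Iic k, {p : ℝ × ℝ | p.1 ≤ p.2}.indicator (fun _ => (1 : ℝ≥0∞)) (x, t) := by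
    intro x
    have : (fun t => {p : ℝ × ℝ | p.1 ≤ p.2}.indicator (fun _ => (1 : ℝ≥0∞)) (x, t)) =
        (Ici x).indicator (fun _ => (1 : ℝ≥0∞)) := by
      ext t
      simp [indicator]
    rw [this, lintegral_indicator measurableSet_Ici, lintegral_const, one_mul,
      Measure.restrict_restrict measurableSet_Ici, Measure.restrict_apply_univ, Ici_inter_Iic,
      Real.volume_Icc]
  simp_rw [h1]
  rw [lintegral_lintegral_swap]
  · refine lintegral_congr fun t => ?_
    have : (fun x => {p : ℝ × ℝ | p.1 ≤ p.2}.indicator (fun _ => (1 : ℝ≥0∞)) (x, t)) =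
        (Iic t).indicator (fun _ => (1 : ℝ≥0∞)) := by
      ext x
      simp [indicator]
    rw [this, lintegral_indicator measurableSet_Iic, lintegral_const, one_mul,
      Measure.restrict_apply_univ]
  · exact (measurable_const.indicator hmeas).aemeasurable

lemma ConvexOn.monotone_of_tendsto_atBot {Φ : ℝ → ℝ} {c : ℝ} (hΦ : ConvexOn ℝ univ Φ)
    (hlim : Tendsto Φ atBot (𝓝 c)) : Monotone Φ := by
  intro x y hxy
  rcases hxy.eq_or_lt with rfl | hxy
  · rfl
  by_contra! hlt
  have hbound : ∀ᶠ z in atBot, Φ x + (Φ x - Φ y) / (y - x) * (x - z) ≤ Φ z := by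
    filter_upwards [eventually_lt_atBot x] with z hz
    have h := hΦ.slope_mono_adjacent (mem_univ z) (mem_univ y) hz hxy
    have h1 : 0 < x - z := by linarith
    have h2 : 0 < y - x := by linarith
    rw [div_le_div_iff₀ h1 h2] at h
    have : (Φ x - Φ y) / (y - x) * (x - z) ≤ Φ z - Φ x := by
      rw [div_mul_eq_mul_div, div_le_iff₀ h2]
      nlinarith
    linarith
  have htop : Tendsto (fun z => Φ x + (Φ x - Φ y) / (y - x) * (x - z)) atBot atTop := by
    apply tendsto_atTop_add_const_left
    apply Tendsto.const_mul_atTop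
    · exact div_pos (by linarith) (by linarith)
    · exact tendsto_atTop_add_const_left _ _ tendsto_neg_atBot_atTop
  exact not_tendsto_nhds_of_tendsto_atTop (tendsto_atTop_mono' _ hbound htop) c hlim

lemma ConvexOn.continuous_of_univ {f : ℝ → ℝ} (hf : ConvexOn ℝ univ f) : Continuous f :=
  continuousOn_univ.mp (hf.continuousOn isOpen_univ)

lemma ConvexOn.exists_measure_put_eq {Φ : ℝ → ℝ} (hΦ : ConvexOn ℝ univ Φ)
    (hlim : Tendsto Φ atBot (𝓝 0)) :
    ∃ τ : Measure ℝ, SFinite τ ∧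
      ∀ k, ∫⁻ x, ENNReal.ofReal (k - x) ∂τ = ENNReal.ofReal (Φ k) := by
  have hmono := hΦ.monotone_of_tendsto_atBot hlim
  set g : ℝ → ℝ := fun x => derivWithin Φ (Ioi x) x with hg
  have hder : ∀ x, HasDerivWithinAt Φ (g x) (Ioi x) x := fun x =>
    hΦ.hasDerivWithinAt_rightDeriv_of_mem_interior (by simp)
  have hgmono : Monotone g := by
    have := hΦ.monotoneOn_rightDeriv
    rw [interior_univ] at this
    exact monotoneOn_univ.mp this
  have hg0 : ∀ x, 0 ≤ g x := fun x => (hmono.monotoneOn _).derivWithin_nonneg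
  have hgle : ∀ x, g x ≤ Φ (x + 1) - Φ x := by
    intro x
    have := hΦ.rightDeriv_le_slope_of_mem_interior (x := x) (y := x + 1) (by simp) (by simp)
      (by linarith)
    simpa [slope_def_field] using this
  let s := hgmono.stieltjesFunction
  have hs : ∀ x, s x = Function.rightLim g x := fun x => hgmono.stieltjesFunction_eq x
  have hs1 : ∀ x, g x ≤ s x := fun x => by rw [hs]; exact hgmono.le_rightLim le_rfl
  have hs2 : ∀ x, s x ≤ g (x + 1) := fun x => by rw [hs]; exact hgmono.rightLim_le (by linarith)
  have hslim : Tendsto s atBot (𝓝 0) := by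
    refine tendsto_of_tendsto_of_tendsto_of_le_of_le tendsto_const_nhds
      (h := fun x => Φ (x + 1 + 1) - Φ (x + 1)) ?_ (fun x => (hg0 x).trans (hs1 x))
      (fun x => (hs2 x).trans (hgle _))
    have h1 : Tendsto (fun x : ℝ => x + 1) atBot atBot :=
      tendsto_atBot_add_const_right _ _ tendsto_id
    simpa [add_assoc] using (hlim.comp (h1.comp h1)).sub (hlim.comp h1)
  refine ⟨s.measure, inferInstance, fun k => ?_⟩
  rw [lintegral_put_eq]
  have hae : ∀ᵐ t : ℝ, s t = g t := by
    have hc := hgmono.countable_not_continuousAt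
    filter_upwards [hc.ae_notMem volume] with t ht
    rw [not_not] at ht
    rw [hs]
    exact ht.continuousWithinAt.rightLim_eq
  have h1 : ∫⁻ t in Iic k, s.measure (Iic t) = ∫⁻ t in Iic k, ENNReal.ofReal (g t) := by
    refine lintegral_congr_ae (ae_restrict_of_ae ?_)
    filter_upwards [hae] with t ht
    rw [s.measure_Iic hslim, sub_zero, ht]
  rw [h1]
  have hcover : AECover (volume.restrict (Iic k)) atBot (fun a : ℝ => Ioi a) :=
    (aecover_Ioi tendsto_id).restrict
  refine hcover.lintegral_eq_of_tendsto _ hgmono.measurable.ennreal_ofReal.aemeasurable ?_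
  have h2 : ∀ᶠ a in atBot, ENNReal.ofReal (Φ k - Φ a) =
      ∫⁻ t in Ioi a, ENNReal.ofReal (g t) ∂(volume.restrict (Iic k)) := by
    filter_upwards [eventually_le_atBot k] with a ha
    have hint : IntervalIntegrable g volume a k := hgmono.intervalIntegrable
    rw [Measure.restrict_restrict measurableSet_Ioi, Ioi_inter_Iic,
      ← intervalIntegral.integral_eq_sub_of_hasDeriv_right_of_le ha
        hΦ.continuous_of_univ.continuousOn (fun x _ => hder x) hint,
      intervalIntegral.integral_of_le ha, ofReal_integral_eq_lintegral_ofReal]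
    · exact hint.1
    · exact ae_of_all _ hg0
  refine Tendsto.congr' h2 ?_
  have := (ENNReal.continuous_ofReal.tendsto _).comp (hlim.const_sub (Φ k))
  simpa [Function.comp_def] using this

lemma convexOn_put (x : ℝ) : ConvexOn ℝ univ fun k : ℝ => max (k - x) 0 :=
  ((convexOn_id convex_univ).sub (concaveOn_const x convex_univ)).sup
    (convexOn_const 0 convex_univ)

lemma convexOn_put_strike (k : ℝ) : ConvexOn ℝ univ fun x : ℝ => max (k - x) 0 :=
  ((convexOn_const k convex_univ).sub (concaveOn_id convex_univ)).sup
    (convexOn_const 0 convex_univ)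

lemma antitone_put_strike (k : ℝ) : Antitone fun x : ℝ => max (k - x) 0 := fun x y hxy => by
  dsimp only
  gcongr

lemma MemM.integrable_put {η : Measure ℝ} (hη : MemM η) (k : ℝ) :
    Integrable (fun x => max (k - x) 0) η := by
  have := hη.1
  exact ((integrable_const k).sub hη.2).pos_part

lemma Ppot_nonneg (η : Measure ℝ) (k : ℝ) : 0 ≤ Ppot η k :=
  integral_nonneg fun _ => le_max_right _ _

lemma ofReal_Ppot {η : Measure ℝ} {k : ℝ} (hη : Integrable (fun x => max (k - x) 0) η) :
    ENNReal.ofReal (Ppot η k) = ∫⁻ x, ENNReal.ofReal (k - x) ∂η := by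
  rw [Ppot, ofReal_integral_eq_lintegral_ofReal hη
    (ae_of_all _ fun _ => le_max_right _ _)]
  simp [ENNReal.ofReal_max]

lemma MemM.convexOn_Ppot {η : Measure ℝ} (hη : MemM η) : ConvexOn ℝ univ (Ppot η) := by
  refine ⟨convex_univ, fun k _ l _ a b ha hb hab => ?_⟩
  simp only [Ppot, smul_eq_mul]
  rw [← integral_const_mul, ← integral_const_mul,
    ← integral_add ((hη.integrable_put k).const_mul a) ((hη.integrable_put l).const_mul b)]
  exact integral_mono (hη.integrable_put _)
    (((hη.integrable_put k).const_mul a).add ((hη.integrable_put l).const_mul b))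
    fun x => (convexOn_put x).2 (mem_univ k) (mem_univ l) ha hb hab

lemma MemM.tendsto_Ppot_atBot {η : Measure ℝ} (hη : MemM η) :
    Tendsto (Ppot η) atBot (𝓝 0) := by
  have h : Tendsto (Ppot η) atBot (𝓝 (∫ _, (0 : ℝ) ∂η)) := by
    refine tendsto_integral_filter_of_dominated_convergence (fun x => max (0 - x) 0)
      (Eventually.of_forall fun k => (hη.integrable_put k).aestronglyMeasurable) ?_
      (hη.integrable_put 0) (ae_of_all _ fun x => ?_)
    · filter_upwards [eventually_le_atBot 0] with k hk
      refine ae_of_all _ fun x => ?_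
      rw [Real.norm_of_nonneg (le_max_right _ _)]
      gcongr
    · refine tendsto_const_nhds.congr' ?_
      filter_upwards [eventually_le_atBot x] with k hk
      rw [max_eq_right (by linarith)]
  simpa using h

lemma MemM.of_le {η χ : Measure ℝ} (hχ : MemM χ) (h : η ≤ χ) : MemM η := by
  have := hχ.1
  exact ⟨isFiniteMeasure_of_le χ h, hχ.2.mono_measure h⟩

lemma Ppot_add {η χ : Measure ℝ} {k : ℝ} (hη : Integrable (fun x => max (k - x) 0) η)
    (hχ : Integrable (fun x => max (k - x) 0) χ) :
    Ppot (η + χ) k = Ppot η k + Ppot χ k :=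
  integral_add_measure hη hχ

lemma Ppot_mono {η χ : Measure ℝ} (hχ : MemM χ) (h : η ≤ χ) (k : ℝ) :
    Ppot η k ≤ Ppot χ k :=
  integral_mono_measure h (ae_of_all _ fun _ => le_max_right _ _) (hχ.integrable_put k)

lemma convexOn_Ppot_sub_of_le {η χ : Measure ℝ} (hχ : MemM χ) (h : η ≤ χ) :
    ConvexOn ℝ univ fun k => Ppot χ k - Ppot η k := by
  have hη := hχ.of_le h
  have := hη.1
  have hadd : χ - η + η = χ := Measure.sub_add_cancel_of_le h
  have hsub : MemM (χ - η) := hχ.of_le Measure.sub_le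
  convert hsub.convexOn_Ppot using 2 with k
  have := Ppot_add (hsub.integrable_put k) (hη.integrable_put k)
  rw [hadd] at this
  linarith

lemma Ppot_slope_tendsto (η : Measure ℝ) [IsFiniteMeasure η]
    (hη : ∀ k, Integrable (fun x => max (k - x) 0) η) (k : ℝ) :
    Tendsto (fun n : ℕ => ((n : ℝ) + 1) * (Ppot η (k + 1 / ((n : ℝ) + 1)) - Ppot η k)) atTop
      (𝓝 (η.real (Iic k))) := by
  have heq : ∀ n : ℕ, ((n : ℝ) + 1) * (Ppot η (k + 1 / ((n : ℝ) + 1)) - Ppot η k) =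
      ∫ x, ((n : ℝ) + 1) * (max (k + 1 / ((n : ℝ) + 1) - x) 0 - max (k - x) 0) ∂η := by
    intro n
    rw [integral_const_mul, integral_sub (hη _) (hη _), Ppot, Ppot]
  simp_rw [heq]
  rw [← integral_indicator_one measurableSet_Iic]
  refine tendsto_integral_of_dominated_convergence (fun _ => 1)
    (fun n => (((hη _).sub (hη _)).const_mul _).aestronglyMeasurable)
    (integrable_const _) (fun n => ae_of_all _ fun x => ?_) (ae_of_all _ fun x => ?_)
  · have hn : (0 : ℝ) < n + 1 := by positivity
    have hp : 0 < 1 / ((n : ℝ) + 1) := by positivity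
    have h0 : 0 ≤ max (k + 1 / ((n : ℝ) + 1) - x) 0 - max (k - x) 0 := by
      rw [sub_nonneg]
      gcongr
      linarith
    have h1 : max (k + 1 / ((n : ℝ) + 1) - x) 0 - max (k - x) 0 ≤ 1 / ((n : ℝ) + 1) := by
      rw [sub_le_iff_le_add]
      refine max_le ?_ (by positivity)
      linarith [le_max_left (k - x) 0]
    rw [Real.norm_of_nonneg (by positivity)]
    calc _ ≤ ((n : ℝ) + 1) * (1 / ((n : ℝ) + 1)) := by gcongr
      _ = 1 := by field_simp
  · refine tendsto_const_nhds.congr' ?_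
    rcases le_or_gt x k with hx | hx
    · refine Eventually.of_forall fun n => ?_
      have hn : (0 : ℝ) < n + 1 := by positivity
      have hp : 0 < 1 / ((n : ℝ) + 1) := by positivity
      dsimp only
      rw [max_eq_left (by linarith : 0 ≤ k - x),
        max_eq_left (by linarith : 0 ≤ k + 1 / ((n : ℝ) + 1) - x),
        indicator_of_mem (by exact hx), Pi.one_apply]
      field_simp
      ring
    · filter_upwards [tendsto_one_div_add_atTop_nhds_zero_nat.eventually_lt_const
        (sub_pos.mpr hx)] with n hn
      rw [max_eq_right (by linarith), max_eq_right (by linarith),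
        indicator_of_notMem (by simpa using hx)]
      simp

lemma ext_of_Ppot {η χ : Measure ℝ} [IsFiniteMeasure η] [IsFiniteMeasure χ]
    (hη : ∀ k, Integrable (fun x => max (k - x) 0) η)
    (hχ : ∀ k, Integrable (fun x => max (k - x) 0) χ)
    (h : ∀ k, Ppot η k = Ppot χ k) : η = χ := by
  refine Measure.ext_of_Iic _ _ fun k => ?_
  have h1 := Ppot_slope_tendsto η hη k
  simp_rw [h] at h1
  have h2 := tendsto_nhds_unique h1 (Ppot_slope_tendsto χ hχ k)
  exact (measureReal_eq_measureReal_iff).mp h2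

lemma measure_univ_le_of_Ppot_slope {τ : Measure ℝ} [SFinite τ] {Φ : ℝ → ℝ} {L : ℝ}
    (hτ : ∀ k, ∫⁻ x, ENNReal.ofReal (k - x) ∂τ = ENNReal.ofReal (Φ k))
    (hΦ : ∀ k, 0 ≤ Φ k) (hL : ∀ k, Φ (k + 1) - Φ k ≤ L) : τ univ ≤ ENNReal.ofReal L := by
  have key : ∀ k, τ (Iic k) ≤ ENNReal.ofReal L := by
    intro k
    have h1 : τ (Iic k) + ENNReal.ofReal (Φ k) ≤ ENNReal.ofReal (Φ (k + 1)) := by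
      rw [← hτ, ← hτ, ← lintegral_indicator_one measurableSet_Iic, ← lintegral_add_right]
      · refine lintegral_mono fun x => ?_
        rcases le_or_gt x k with hx | hx
        · rw [indicator_of_mem (by exact hx), Pi.one_apply, ← ENNReal.ofReal_one,
            ← ENNReal.ofReal_add zero_le_one (by linarith)]
          exact ENNReal.ofReal_le_ofReal (by linarith)
        · rw [indicator_of_notMem (by simpa using hx), zero_add]
          exact ENNReal.ofReal_le_ofReal (by linarith)
      · fun_prop
    have h2 := ENNReal.le_sub_of_add_le_right ENNReal.ofReal_ne_top h1
    rw [← ENNReal.ofReal_sub _ (hΦ k)] at h2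
    exact h2.trans (ENNReal.ofReal_le_ofReal (hL k))
  have hU : (univ : Set ℝ) = ⋃ n : ℕ, Iic (n : ℝ) := by
    refine (eq_univ_of_forall fun x => ?_).symm
    obtain ⟨n, hn⟩ := exists_nat_ge x
    exact mem_iUnion.mpr ⟨n, hn⟩
  have hm : Monotone fun n : ℕ => Iic (n : ℝ) := fun a b hab =>
    Iic_subset_Iic.mpr (by exact_mod_cast hab)
  rw [hU, hm.measure_iUnion]
  exact iSup_le fun n => key n

lemma MemM.Ppot_add_one_sub_le {η : Measure ℝ} (hη : MemM η) (k : ℝ) :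
    Ppot η (k + 1) - Ppot η k ≤ η.real univ := by
  have := hη.1
  rw [Ppot, Ppot, ← integral_sub (hη.integrable_put _) (hη.integrable_put _)]
  have h : ∫ _, (1 : ℝ) ∂η = η.real univ := by simp
  rw [← h]
  refine integral_mono ((hη.integrable_put _).sub (hη.integrable_put _)) (integrable_const _)
    fun x => ?_
  simp only [tsub_le_iff_right]
  exact max_le (by linarith [le_max_left (k - x) 0]) (by positivity)

lemma integrable_put_of_lintegral_eq {τ : Measure ℝ} {Φ : ℝ → ℝ}
    (hτ : ∀ k, ∫⁻ x, ENNReal.ofReal (k - x) ∂τ = ENNReal.ofReal (Φ k)) (k : ℝ) :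
    Integrable (fun x => max (k - x) 0) τ := by
  refine ⟨by fun_prop, ?_⟩
  rw [hasFiniteIntegral_iff_ofReal (ae_of_all _ fun x => le_max_right (k - x) 0)]
  simp [ENNReal.ofReal_max, hτ]

lemma Ppot_eq_of_lintegral_eq {τ : Measure ℝ} {Φ : ℝ → ℝ} (hΦ : ∀ k, 0 ≤ Φ k)
    (hτ : ∀ k, ∫⁻ x, ENNReal.ofReal (k - x) ∂τ = ENNReal.ofReal (Φ k)) (k : ℝ) :
    Ppot τ k = Φ k := by
  rw [← ENNReal.ofReal_eq_ofReal_iff (Ppot_nonneg _ _) (hΦ k), ← hτ,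
    ofReal_Ppot (integrable_put_of_lintegral_eq hτ k)]

/-- A decomposition of the potential of `χ` into two convex functions vanishing at `-∞` comes from
a decomposition of `χ` into two measures. -/
lemma MemM.exists_add_eq_of_convexOn {χ : Measure ℝ} (hχ : MemM χ) {Φ Ψ : ℝ → ℝ}
    (hΦ : ConvexOn ℝ univ Φ) (hΨ : ConvexOn ℝ univ Ψ) (hΦ0 : Tendsto Φ atBot (𝓝 0))
    (hadd : ∀ k, Φ k + Ψ k = Ppot χ k) :
    ∃ η θ : Measure ℝ, MemM η ∧ MemM θ ∧ η + θ = χ ∧ (∀ k, Ppot η k = Φ k) ∧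
      ∀ k, Ppot θ k = Ψ k := by
  have hΨ0 : Tendsto Ψ atBot (𝓝 0) := by
    have : Ψ = fun k => Ppot χ k - Φ k := by
      ext k
      linarith [hadd k]
    rw [this]
    simpa using hχ.tendsto_Ppot_atBot.sub hΦ0
  have hΦm := hΦ.monotone_of_tendsto_atBot hΦ0
  have hΨm := hΨ.monotone_of_tendsto_atBot hΨ0
  have hΦn : ∀ k, 0 ≤ Φ k := hΦm.le_of_tendsto hΦ0
  have hΨn : ∀ k, 0 ≤ Ψ k := hΨm.le_of_tendsto hΨ0
  obtain ⟨η, hη, hηp⟩ := hΦ.exists_measure_put_eq hΦ0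
  obtain ⟨θ, hθ, hθp⟩ := hΨ.exists_measure_put_eq hΨ0
  have hΦL : ∀ k, Φ (k + 1) - Φ k ≤ χ.real univ := fun k => by
    have := hΨm (show k ≤ k + 1 by linarith)
    linarith [hχ.Ppot_add_one_sub_le k, hadd k, hadd (k + 1)]
  have hΨL : ∀ k, Ψ (k + 1) - Ψ k ≤ χ.real univ := fun k => by
    have := hΦm (show k ≤ k + 1 by linarith)
    linarith [hχ.Ppot_add_one_sub_le k, hadd k, hadd (k + 1)]
  have hηf : IsFiniteMeasure η :=
    ⟨(measure_univ_le_of_Ppot_slope hηp hΦn hΦL).trans_lt ENNReal.ofReal_lt_top⟩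
  have hθf : IsFiniteMeasure θ :=
    ⟨(measure_univ_le_of_Ppot_slope hθp hΨn hΨL).trans_lt ENNReal.ofReal_lt_top⟩
  have hsum : η + θ = χ := by
    have hηi := integrable_put_of_lintegral_eq hηp
    have hθi := integrable_put_of_lintegral_eq hθp
    have := hχ.1
    refine ext_of_Ppot (fun k => (hηi k).add_measure (hθi k)) hχ.integrable_put fun k => ?_
    rw [Ppot_add (hηi k) (hθi k), Ppot_eq_of_lintegral_eq hΦn hηp,
      Ppot_eq_of_lintegral_eq hΨn hθp, hadd]
  have hηM : MemM η := hχ.of_le (hsum ▸ Measure.le_add_right le_rfl)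
  have hθM : MemM θ := hχ.of_le (hsum ▸ Measure.le_add_left le_rfl)
  exact ⟨η, θ, hηM, hθM, hsum, Ppot_eq_of_lintegral_eq hΦn hηp, Ppot_eq_of_lintegral_eq hΨn hθp⟩

lemma IsConvexHullFn.exists_of_nonneg {F : ℝ → ℝ} (hF : ∀ x, 0 ≤ F x) :
    ∃ h, IsConvexHullFn F h := by
  let G := {g : ℝ → ℝ // ConvexOn ℝ univ g ∧ ∀ x, g x ≤ F x}
  have : Nonempty G := ⟨⟨fun _ => 0, convexOn_const 0 convex_univ, hF⟩⟩
  have hbdd : ∀ x, BddAbove (range fun g : G => g.1 x) := fun x =>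
    ⟨F x, by rintro _ ⟨g, rfl⟩; exact g.2.2 x⟩
  refine ⟨fun x => ⨆ g : G, g.1 x, ⟨convex_univ, fun x _ y _ a b ha hb hab => ?_⟩,
    fun x => ciSup_le fun g => g.2.2 x, fun g hg hgF x => le_ciSup (hbdd x) ⟨g, hg, hgF⟩⟩
  refine ciSup_le fun g => (g.2.1.2 (mem_univ x) (mem_univ y) ha hb hab).trans ?_
  simp only [smul_eq_mul]
  gcongr
  · exact le_ciSup (hbdd x) g
  · exact le_ciSup (hbdd y) g

lemma IsConvexHullFn.eventually_add_le {F h : ℝ → ℝ} (hh : IsConvexHullFn F h)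
    (hF : Continuous F) {y : ℝ} (hy : h y < F y) :
    ∀ᶠ ε in 𝓝[>] (0 : ℝ), h (y - ε) + h (y + ε) ≤ 2 * h y := by
  obtain ⟨c, hc1, hc2⟩ := exists_between hy
  have hcont := hh.1.continuous_of_univ
  have hev : ∀ᶠ t in 𝓝 y, h t < c ∧ c < F t :=
    (hcont.continuousAt.eventually_lt_const hc1).and (hF.continuousAt.eventually_const_lt hc2)
  obtain ⟨δ, hδ, hball⟩ := Metric.eventually_nhds_iff.mp hev
  filter_upwards [Ioo_mem_nhdsGT hδ] with ε hε
  obtain ⟨hε0, hεδ⟩ := hε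
  have hin : ∀ t, |t - y| ≤ ε → h t < c ∧ c < F t := fun t ht =>
    hball (by rw [Real.dist_eq]; linarith)
  set m := (h (y + ε) - h (y - ε)) / (2 * ε) with hm
  set l : ℝ → ℝ := fun t => (h (y - ε) + h (y + ε)) / 2 + m * (t - y) with hl
  have hmε : m * ε = (h (y + ε) - h (y - ε)) / 2 := by
    rw [hm]
    field_simp
  have hlconv : ConvexOn ℝ univ l := by
    refine ⟨convex_univ, fun s _ t _ a b _ _ hab => le_of_eq ?_⟩
    simp only [hl, smul_eq_mul]
    linear_combination ((h (y - ε) + h (y + ε)) / 2 - m * y) * (-hab)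
  have hll : l (y - ε) = h (y - ε) := by simp only [hl]; linarith
  have hlr : l (y + ε) = h (y + ε) := by simp only [hl]; linarith
  have hlF : ∀ t, l t ≤ F t := by
    intro t
    have hmin := (hin (y - ε) (by rw [abs_le]; constructor <;> linarith)).1
    have hmax := (hin (y + ε) (by rw [abs_le]; constructor <;> linarith)).1
    rcases lt_or_ge t (y - ε) with ht | ht
    · refine le_trans ?_ (hh.2.1 t)
      have hs := hh.1.slope_mono_adjacent (mem_univ t) (mem_univ (y + ε)) ht (by linarith)
      rw [show y + ε - (y - ε) = 2 * ε by ring, ← hm, div_le_iff₀ (by linarith)] at hs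
      simp only [hl] at hll ⊢
      nlinarith
    rcases le_or_gt t (y + ε) with ht' | ht'
    · refine le_trans ?_ (hin t (by rw [abs_le]; constructor <;> linarith)).2.le
      simp only [hl] at hll hlr ⊢
      rcases le_total 0 m with h0 | h0 <;> nlinarith
    · refine le_trans ?_ (hh.2.1 t)
      have hs := hh.1.slope_mono_adjacent (mem_univ (y - ε)) (mem_univ t) (by linarith) ht'
      rw [show y + ε - (y - ε) = 2 * ε by ring, ← hm, le_div_iff₀ (by linarith)] at hs
      simp only [hl] at hlr ⊢
      nlinarith
  have := hh.2.2 l hlconv hlF y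
  simp only [hl] at this
  linarith

/-- Adding a convex function increases the convex hull by a convex function. -/
lemma IsConvexHullFn.convexOn_sub {F G h h' : ℝ → ℝ} (hF : Continuous F)
    (hG : ConvexOn ℝ univ G) (hh : IsConvexHullFn F h)
    (hh' : IsConvexHullFn (fun x => F x + G x) h') :
    ConvexOn ℝ univ fun x => h' x - h x := by
  have hGle : ∀ x, h x + G x ≤ h' x :=
    hh'.2.2 _ (hh.1.add hG) fun x => by linarith [hh.2.1 x]
  have hcont : Continuous fun x => h' x - h x :=
    hh'.1.continuous_of_univ.sub hh.1.continuous_of_univ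
  refine LinearOrder.convexOn_of_lt convex_univ fun x _ z _ hxz a b ha hb hab => ?_
  have hxz' : 0 < z - x := by linarith
  set φ : ℝ → ℝ := fun x => h' x - h x with hφ
  set m := (φ z - φ x) / (z - x) with hm
  have hmz : m * (z - x) = φ z - φ x := by
    rw [hm]
    field_simp
  set ψ : ℝ → ℝ := fun t => φ t - φ x - m * (t - x) with hψ
  have hψcont : Continuous ψ := by fun_prop
  have hψx : ψ x = 0 := by simp [hψ]
  have hψz : ψ z = 0 := by simp only [hψ]; linarith
  suffices H : ∀ y ∈ Icc x z, ψ y ≤ 0 by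
    have hb' : b = 1 - a := by linarith
    have := H (a * x + b * z) ⟨by subst hb'; nlinarith, by subst hb'; nlinarith⟩
    simp only [smul_eq_mul]
    have h2 : m * (a * x + b * z - x) = b * (φ z - φ x) := by
      rw [← hmz, hb']
      ring
    simp only [hψ, h2] at this
    have h3 : φ x = a * φ x + b * φ x := by rw [← add_mul, hab, one_mul]
    linarith
  by_contra! hcon
  obtain ⟨y₀, hy₀, hpos⟩ := hcon
  obtain ⟨y₁, hy₁, hmax⟩ := isCompact_Icc.exists_isMaxOn ⟨y₀, hy₀⟩ hψcont.continuousOn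
  have hM : 0 < ψ y₁ := hpos.trans_le (hmax hy₀)
  obtain ⟨y, ⟨hy, hyM⟩, hleast⟩ :=
    (isCompact_Icc.inter_right (isClosed_singleton.preimage hψcont (t := {ψ y₁}))).exists_isLeast
      ⟨y₁, hy₁, rfl⟩
  replace hyM : ψ y = ψ y₁ := hyM
  have hyx : x < y := lt_of_le_of_ne hy.1 fun he => by rw [← he, hψx] at hyM; linarith
  have hyz : y < z := lt_of_le_of_ne hy.2 fun he => by rw [he, hψz] at hyM; linarith
  rcases (hh.2.1 y).lt_or_eq with hlt | heq
  · have hev := (hh.eventually_add_le hF hlt).and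
      (Ioo_mem_nhdsGT (lt_min (sub_pos.mpr hyx) (sub_pos.mpr hyz)))
    obtain ⟨ε, hε, hε0, hεm⟩ := hev.exists
    have hε1 := hεm.trans_le (min_le_left _ _)
    have hε2 := hεm.trans_le (min_le_right _ _)
    have hconv : 2 * h' y ≤ h' (y - ε) + h' (y + ε) := by
      have := hh'.1.2 (mem_univ (y - ε)) (mem_univ (y + ε))
        (by norm_num : (0 : ℝ) ≤ 1 / 2) (by norm_num : (0 : ℝ) ≤ 1 / 2) (by norm_num)
      simp only [smul_eq_mul] at this
      rw [show 1 / 2 * (y - ε) + 1 / 2 * (y + ε) = y by ring] at this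
      linarith
    have hl : ψ (y - ε) < ψ y₁ := by
      refine lt_of_le_of_ne (hmax ⟨by linarith, by linarith⟩) fun he => ?_
      have := hleast ⟨⟨by linarith, by linarith⟩, he⟩
      linarith
    have hr : ψ (y + ε) ≤ ψ y₁ := hmax ⟨by linarith, by linarith⟩
    simp only [hψ, hφ] at hl hr hyM
    linarith
  · have hφy : φ y ≤ G y := by
      have := hh'.2.1 y
      simp only [hφ]
      linarith
    have hGx : G x ≤ φ x := by simp only [hφ]; linarith [hGle x]
    have hGz : G z ≤ φ z := by simp only [hφ]; linarith [hGle z]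
    have hs := hG.slope_mono_adjacent (mem_univ x) (mem_univ z) hyx hyz
    rw [div_le_div_iff₀ (by linarith) (by linarith)] at hs
    have hlin : ψ y * (z - x) = (φ y - φ x) * (z - x) - (φ z - φ x) * (y - x) := by
      rw [← hmz]
      simp only [hψ]
      ring
    have hpos' : 0 < ψ y * (z - x) := mul_pos (hyM ▸ hM) hxz'
    nlinarith

/-- Integrals of nonnegative convex antitone functions are controlled by the total mass and the
potential: such a function is a constant plus a mixture of functions `x ↦ (k - x)⁺`. -/
lemma lintegral_le_of_Ppot_le {η χ : Measure ℝ} (hη : MemM η) (hχ : MemM χ)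
    (huniv : η univ ≤ χ univ) (hP : ∀ k, Ppot η k ≤ Ppot χ k) {f : ℝ → ℝ} (hf0 : ∀ x, 0 ≤ f x)
    (hf : ConvexOn ℝ univ f) (hanti : Antitone f) :
    ∫⁻ x, ENNReal.ofReal (f x) ∂η ≤ ∫⁻ x, ENNReal.ofReal (f x) ∂χ := by
  have := hη.1
  have := hχ.1
  have hbdd : BddBelow (range f) := ⟨0, by rintro _ ⟨x, rfl⟩; exact hf0 x⟩
  have hlim := tendsto_atTop_ciInf hanti hbdd
  set c := ⨅ x, f x with hc
  have hc0 : 0 ≤ c := le_ciInf hf0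
  have hcf : ∀ x, c ≤ f x := fun x => ciInf_le hbdd x
  have hΦ : ConvexOn ℝ univ fun x => f (-x) - c := by
    refine ConvexOn.sub ?_ (concaveOn_const c convex_univ)
    exact hf.comp_linearMap (-LinearMap.id)
  have hΦ0 : Tendsto (fun x => f (-x) - c) atBot (𝓝 0) := by
    simpa using (hlim.comp tendsto_neg_atBot_atTop).sub_const c
  obtain ⟨τ, hτ, hτp⟩ := hΦ.exists_measure_put_eq hΦ0
  have hrepr : ∀ x, ENNReal.ofReal (f x) =
      ENNReal.ofReal c + ∫⁻ y, ENNReal.ofReal (-x - y) ∂τ := by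
    intro x
    rw [hτp, neg_neg, ← ENNReal.ofReal_add hc0 (sub_nonneg.mpr (hcf x))]
    simp
  have hval : ∀ (ρ : Measure ℝ), MemM ρ → ∫⁻ x, ENNReal.ofReal (f x) ∂ρ =
      ENNReal.ofReal c * ρ univ + ∫⁻ y, ENNReal.ofReal (Ppot ρ (-y)) ∂τ := by
    intro ρ hρ
    have := hρ.1
    simp_rw [hrepr]
    rw [lintegral_add_left measurable_const, lintegral_const, lintegral_lintegral_swap]
    · congr 1
      refine lintegral_congr fun y => ?_
      rw [ofReal_Ppot (hρ.integrable_put _)]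
      refine lintegral_congr fun x => ?_
      rw [show -x - y = -y - x by ring]
    · exact Measurable.aemeasurable (by fun_prop)
  rw [hval η hη, hval χ hχ]
  gcongr with y
  exact hP _

lemma lePCD_of_Ppot_le {η χ : Measure ℝ} (hη : MemM η) (hχ : MemM χ)
    (huniv : η univ ≤ χ univ) (hP : ∀ k, Ppot η k ≤ Ppot χ k) : LePCD η χ := by
  intro f hf0 hf hanti hfη hfχ
  rw [integral_eq_lintegral_of_nonneg_ae (ae_of_all _ hf0) hfη.aestronglyMeasurable,
    integral_eq_lintegral_of_nonneg_ae (ae_of_all _ hf0) hfχ.aestronglyMeasurable]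
  refine ENNReal.toReal_mono ?_ (lintegral_le_of_Ppot_le hη hχ huniv hP hf0 hf hanti)
  exact ((hasFiniteIntegral_iff_ofReal (ae_of_all _ hf0)).mp hfχ.2).ne

lemma leCD_of_Ppot_le {η χ : Measure ℝ} (hη : MemM η) (hχ : MemM χ)
    (huniv : η univ = χ univ) (hP : ∀ k, Ppot η k ≤ Ppot χ k) : LeCD η χ := by
  intro f hf hanti hfη hfχ
  have := hη.1
  have := hχ.1
  have hpcd := lePCD_of_Ppot_le hη hχ huniv.le hP
  have hint : ∀ (n : ℕ) (ρ : Measure ℝ) [IsFiniteMeasure ρ], Integrable f ρ →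
      Integrable (fun x => max (f x) (-(n : ℝ))) ρ := fun n ρ _ hfρ =>
    hfρ.sup (integrable_const _)
  have hlim : ∀ (ρ : Measure ℝ) [IsFiniteMeasure ρ], Integrable f ρ →
      Tendsto (fun n : ℕ => ∫ x, max (f x) (-(n : ℝ)) ∂ρ) atTop (𝓝 (∫ x, f x ∂ρ)) := by
    intro ρ _ hfρ
    refine tendsto_integral_of_dominated_convergence (fun x => ‖f x‖)
      (fun n => (hint n ρ hfρ).aestronglyMeasurable) hfρ.norm
      (fun n => ae_of_all _ fun x => ?_) (ae_of_all _ fun x => ?_)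
    · rw [Real.norm_eq_abs, Real.norm_eq_abs, abs_le]
      have hn : (0 : ℝ) ≤ n := n.cast_nonneg
      exact ⟨(neg_abs_le _).trans (le_max_left _ _),
        max_le (le_abs_self _) (by linarith [abs_nonneg (f x)])⟩
    · obtain ⟨N, hN⟩ := exists_nat_ge (-f x)
      refine tendsto_const_nhds.congr' ?_
      filter_upwards [eventually_ge_atTop N] with n hn
      have : (N : ℝ) ≤ n := by exact_mod_cast hn
      rw [max_eq_left (by linarith)]
  refine le_of_tendsto_of_tendsto' (hlim η hfη) (hlim χ hfχ) fun n => ?_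
  have h := hpcd (fun x => max (f x) (-(n : ℝ)) + n)
    (fun x => by linarith [le_max_right (f x) (-(n : ℝ))])
    ((hf.sup (convexOn_const _ convex_univ)).add (convexOn_const _ convex_univ))
    (fun x y hxy => by
      have := hanti hxy
      dsimp only
      gcongr)
    ((hint n η hfη).add (integrable_const _)) ((hint n χ hfχ).add (integrable_const _))
  rw [integral_add (hint n η hfη) (integrable_const _),
    integral_add (hint n χ hfχ) (integrable_const _)] at h
  simpa [Measure.real, huniv] using h

lemma LeCD.lePCD {η χ : Measure ℝ} (h : LeCD η χ) : LePCD η χ :=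
  fun f _ hf => h f hf

lemma LePCD.Ppot_le {η χ : Measure ℝ} (h : LePCD η χ) (hη : MemM η) (hχ : MemM χ) (k : ℝ) :
    Ppot η k ≤ Ppot χ k :=
  h _ (fun _ => le_max_right _ _) (convexOn_put_strike k) (antitone_put_strike k)
    (hη.integrable_put k) (hχ.integrable_put k)

lemma LePCD.measure_univ_le {η χ : Measure ℝ} (h : LePCD η χ) (hη : MemM η) (hχ : MemM χ) :
    η univ ≤ χ univ := by
  have := hη.1
  have := hχ.1
  have h1 := h (fun _ => 1) (fun _ => zero_le_one) (convexOn_const _ convex_univ)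
    antitone_const (integrable_const _) (integrable_const _)
  simp only [integral_const, smul_eq_mul, mul_one] at h1
  exact (ENNReal.toReal_le_toReal (measure_ne_top _ _) (measure_ne_top _ _)).mp h1

lemma LePCD.of_le {ξ μ ν : Measure ℝ} (h : LePCD μ ν) (hμ : MemM μ) (hν : MemM ν)
    (hle : ξ ≤ μ) : LePCD ξ ν :=
  lePCD_of_Ppot_le (hμ.of_le hle) hν ((hle univ).trans (h.measure_univ_le hμ hν))
    fun k => (Ppot_mono hμ hle k).trans (h.Ppot_le hμ hν k)

lemma LeCD.antisymm {η χ : Measure ℝ} (h : LeCD η χ) (h' : LeCD χ η) (hη : MemM η)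
    (hχ : MemM χ) : η = χ := by
  have := hη.1
  have := hχ.1
  exact ext_of_Ppot hη.integrable_put hχ.integrable_put fun k =>
    le_antisymm (h.lePCD.Ppot_le hη hχ k) (h'.lePCD.Ppot_le hχ hη k)

lemma MemM.mul_sub_le_Ppot {η : Measure ℝ} (hη : MemM η) (k : ℝ) :
    η.real univ * k - ∫ x, x ∂η ≤ Ppot η k := by
  have := hη.1
  have h : ∫ x, (k - x) ∂η = η.real univ * k - ∫ x, x ∂η := by
    rw [integral_sub (integrable_const _) hη.2]
    simp
  rw [← h]
  exact integral_mono ((integrable_const _).sub hη.2) (hη.integrable_put k)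
    fun x => le_max_left _ _

lemma MemM.Ppot_le_mul_add {η : Measure ℝ} (hη : MemM η) {k : ℝ} (hk : 0 ≤ k) :
    Ppot η k ≤ η.real univ * k + ∫ x, |x| ∂η := by
  have := hη.1
  have h : ∫ x, (k + |x|) ∂η = η.real univ * k + ∫ x, |x| ∂η := by
    rw [integral_add (integrable_const _) hη.2.abs]
    simp
  rw [← h]
  refine integral_mono (hη.integrable_put k) ((integrable_const _).add hη.2.abs) fun x => ?_
  exact max_le (by linarith [neg_abs_le x]) (by positivity)

lemma le_of_forall_mul_le_add {a b C : ℝ} (h : ∀ k : ℝ, 0 ≤ k → a * k ≤ b * k + C) : a ≤ b := by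
  by_contra! hab
  have hpos : 0 < a - b := sub_pos.mpr hab
  have := h ((|C| + 1) / (a - b)) (by positivity)
  have h2 : (a - b) * ((|C| + 1) / (a - b)) = |C| + 1 := by field_simp
  nlinarith [le_abs_self C]

/-- The measure whose potential is `P_ν - (P_ν - P_μ)^c`. -/
lemma exists_leCD_Ppot_eq {μ ν : Measure ℝ} (hμ : MemM μ) (hν : MemM ν) {h : ℝ → ℝ}
    (hF : ∀ k, Ppot μ k ≤ Ppot ν k)
    (hh : IsConvexHullFn (fun k => Ppot ν k - Ppot μ k) h) :
    ∃ T, MemM T ∧ LeCD μ T ∧ T ≤ ν ∧ ∀ k, Ppot T k = Ppot ν k - h k := by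
  have hFcont : Continuous fun k => Ppot ν k - Ppot μ k :=
    hν.convexOn_Ppot.continuous_of_univ.sub hμ.convexOn_Ppot.continuous_of_univ
  have hh0 : ∀ k, 0 ≤ h k :=
    hh.2.2 (fun _ => 0) (convexOn_const 0 convex_univ) fun k => sub_nonneg.mpr (hF k)
  have hconv : ConvexOn ℝ univ fun k => Ppot ν k - h k := by
    refine hh.convexOn_sub hFcont hμ.convexOn_Ppot ⟨hν.convexOn_Ppot, fun x => by simp, ?_⟩
    intro g _ hg x
    simpa using hg x
  have hlim : Tendsto (fun k => Ppot ν k - h k) atBot (𝓝 0) := by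
    refine tendsto_of_tendsto_of_tendsto_of_le_of_le hμ.tendsto_Ppot_atBot
      hν.tendsto_Ppot_atBot (fun k => ?_) (fun k => ?_)
    · dsimp only
      linarith [hh.2.1 k]
    · dsimp only
      linarith [hh0 k]
  obtain ⟨T, D, hT, hD, hTD, hTp, hDp⟩ := hν.exists_add_eq_of_convexOn hconv hh.1 hlim
    fun k => by ring
  have := hμ.1
  have := hν.1
  have := hT.1
  have := hD.1
  have hPle : ∀ k, Ppot μ k ≤ Ppot T k := fun k => by
    rw [hTp]
    linarith [hh.2.1 k]
  have hadd : T.real univ + D.real univ = ν.real univ := by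
    rw [← hTD, measureReal_add_apply]
  have hmT : μ.real univ ≤ T.real univ :=
    le_of_forall_mul_le_add (C := ∫ x, |x| ∂T + ∫ x, x ∂μ) fun k hk => by
      linarith [hμ.mul_sub_le_Ppot k, hPle k, hT.Ppot_le_mul_add hk]
  have hmn : μ.real univ ≤ ν.real univ := by
    linarith [measureReal_nonneg (μ := D) (s := univ)]
  have hmD : ν.real univ - μ.real univ ≤ D.real univ := by
    set C := |∫ x, x ∂ν + ∫ x, |x| ∂μ| with hC
    have hline : ∀ k, (ν.real univ - μ.real univ) * k - C ≤ h k := by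
      refine hh.2.2 (fun k => (ν.real univ - μ.real univ) * k - C) ?_ fun k => ?_
      · refine ⟨convex_univ, fun s _ t _ a b _ _ hab => le_of_eq ?_⟩
        simp only [smul_eq_mul]
        linear_combination C * hab
      · rcases le_total 0 k with hk | hk
        · have := le_abs_self (∫ x, x ∂ν + ∫ x, |x| ∂μ)
          linarith [hν.mul_sub_le_Ppot k, hμ.Ppot_le_mul_add hk]
        · have : 0 ≤ C := abs_nonneg _
          nlinarith [hF k]
    refine le_of_forall_mul_le_add (C := C + ∫ x, |x| ∂D) fun k hk => ?_
    linarith [hline k, hDp k, hD.Ppot_le_mul_add hk]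
  have huniv : μ univ = T univ :=
    (measureReal_eq_measureReal_iff).mp (le_antisymm hmT (by linarith))
  exact ⟨T, hT, leCD_of_Ppot_le hμ hT huniv hPle, hTD ▸ Measure.le_add_right le_rfl, hTp⟩

/-- The potential of the shadow of `μ` in `ν` is `P_ν - (P_ν - P_μ)^c`. -/
lemma IsShadow.isConvexHullFn {μ ν S : Measure ℝ} (hμ : MemM μ) (hν : MemM ν)
    (hS : IsShadow μ ν S) :
    IsConvexHullFn (fun k => Ppot ν k - Ppot μ k) fun k => Ppot ν k - Ppot S k := by
  obtain ⟨hSM, hμS, hSν, hmin⟩ := hS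
  have hSle : S ≤ ν := Measure.le_iff.mpr hSν
  have hPμS := hμS.lePCD.Ppot_le hμ hSM
  have hF : ∀ k, Ppot μ k ≤ Ppot ν k := fun k => (hPμS k).trans (Ppot_mono hν hSle k)
  obtain ⟨h, hh⟩ := IsConvexHullFn.exists_of_nonneg fun k => sub_nonneg.mpr (hF k)
  obtain ⟨T, hT, hμT, hTν, hTp⟩ := exists_leCD_Ppot_eq hμ hν hF hh
  refine ⟨convexOn_Ppot_sub_of_le hν hSle, fun k => by linarith [hPμS k], fun g hg hgF k => ?_⟩
  have h1 := (hmin T hT hμT (Measure.le_iff.mp hTν)).lePCD.Ppot_le hSM hT k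
  linarith [hh.2.2 g hg hgF k, hTp k]

lemma IsShadow.le_of_le {ξ μ ν S S' : Measure ℝ} (hμ : MemM μ) (hν : MemM ν) (hle : ξ ≤ μ)
    (hS : IsShadow μ ν S) (hS' : IsShadow ξ ν S') : S' ≤ S := by
  have hξ := hμ.of_le hle
  have hFcont : Continuous fun k => Ppot ν k - Ppot μ k :=
    hν.convexOn_Ppot.continuous_of_univ.sub hμ.convexOn_Ppot.continuous_of_univ
  have hhull : IsConvexHullFn
      (fun k => (Ppot ν k - Ppot μ k) + (Ppot μ k - Ppot ξ k)) fun k => Ppot ν k - Ppot S' k := by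
    simpa using hS'.isConvexHullFn hξ hν
  have hconv : ConvexOn ℝ univ fun k => Ppot S k - Ppot S' k := by
    simpa using (hS.isConvexHullFn hμ hν).convexOn_sub hFcont (convexOn_Ppot_sub_of_le hμ hle) hhull
  obtain ⟨η, θ, hη, -, hsum, hηp, -⟩ := hS.1.exists_add_eq_of_convexOn hS'.1.convexOn_Ppot hconv
    hS'.1.tendsto_Ppot_atBot fun k => by ring
  have := hη.1
  have := hS'.1.1
  rw [← ext_of_Ppot hη.integrable_put hS'.1.integrable_put hηp, ← hsum]
  exact Measure.le_add_right le_rfl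

/-- Lemma 3.12: structural property of the shadow, `S^{S^ν(μ)}(ξ) = S^ν(ξ)` for
`ξ ≤ μ ≤_pcd ν`; in particular `S^ν(ξ) ≤ S^ν(μ)`. -/
theorem shadow_of_smaller_measure
    (ξ μ ν : MeasureTheory.Measure ℝ)
    (hξ : MemM ξ) (hμ : MemM μ) (hν : MemM ν)
    (hle : ∀ A : Set ℝ, MeasurableSet A → ξ A ≤ μ A)
    (hpcd : LePCD μ ν)
    (Sμ : MeasureTheory.Measure ℝ) (hSμ : IsShadow μ ν Sμ) :
    LePCD ξ ν ∧ LePCD ξ Sμ ∧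
    (∀ S' S'' : MeasureTheory.Measure ℝ,
      IsShadow ξ Sμ S' → IsShadow ξ ν S'' → S' = S'') ∧
    (∀ S'' : MeasureTheory.Measure ℝ, IsShadow ξ ν S'' →
      ∀ A : Set ℝ, MeasurableSet A → S'' A ≤ Sμ A) := by

  have hleM : ξ ≤ μ := Measure.le_iff.mpr hle
  have hle_shadow : ∀ S'', IsShadow ξ ν S'' → S'' ≤ Sμ := fun S'' hS'' =>
    hSμ.le_of_le hμ hν hleM hS''
  refine ⟨hpcd.of_le hμ hν hleM, hSμ.2.1.lePCD.of_le hμ hSμ.1 hleM, fun S' S'' hS' hS'' => ?_,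
    fun S'' hS'' => Measure.le_iff.mp (hle_shadow S'' hS'')⟩
  refine LeCD.antisymm ?_ ?_ hS'.1 hS''.1
  · exact hS'.2.2.2 S'' hS''.1 hS''.2.1 (Measure.le_iff.mp (hle_shadow S'' hS''))
  · exact hS''.2.2.2 S' hS'.1 hS'.2.1 fun A hA => (hS'.2.2.1 A hA).trans (hSμ.2.2.1 A hA)
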